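/- Let K be a relatively congruence distributive quasivariety whose class K_rfsi of relatively finitely subdirectly irreducible members is closed under nontrivial subalgebras. Then every congruence preserving Beth companion M of K is an arithmetical variety with the congruence extension property such that the class M_fsi of finitely subdirectly irreducible members of M is closed under nontrivial subalgebras. -/

import Mathlib

namespace Impl

open FirstOrder Language

universe u v

/-- A bundled algebra (first-order structure) for the language `L`. -/
structure Alg (L : FirstOrder.Language.{u, u}) : Type (u + 1) where
  carrier : Type u
  [str : L.Structure carrier]

attribute [instance] Alg.str

variable {L : FirstOrder.Language.{u, u}}

/-- The direct product of a family of algebras. -/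
def Alg.pi {ι : Type u} (A : ι → Alg L) : Alg L where
  carrier := ∀ i, (A i).carrier
  str :=
    { funMap := fun {k} f v i => Structure.funMap f fun j => v j i
      RelMap := fun {k} r v => ∀ i, Structure.RelMap r fun j => v j i }

/-- The binary direct product of two algebras. -/
def Alg.prod (A B : Alg L) : Alg L where
  carrier := A.carrier × B.carrier
  str :=
    { funMap := fun {k} f v =>
        (Structure.funMap f fun j => (v j).1, Structure.funMap f fun j => (v j).2)
      RelMap := fun {k} r v =>
        Structure.RelMap r (fun j => (v j).1) ∧ Structure.RelMap r fun j => (v j).2 }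

/-- The ultraproduct of a family of algebras with respect to an ultrafilter. -/
def Alg.uprod {ι : Type u} (F : Ultrafilter ι) (A : ι → Alg L) : Alg L where
  carrier := Filter.Product (F : Filter ι) fun i => (A i).carrier
  str := inferInstance

/-- Closure under isomorphic copies. -/
def ClosedUnderIso (K : Set (Alg L)) : Prop :=
  ∀ A B : Alg L, A ∈ K → Nonempty (A.carrier ≃[L] B.carrier) → B ∈ K

/-- Closure under subalgebras (up to the identification of a subalgebra with an embedding). -/
def ClosedUnderSub (K : Set (Alg L)) : Prop :=
  ∀ A B : Alg L, B ∈ K → Nonempty (A.carrier ↪[L] B.carrier) → A ∈ K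

/-- Closure under direct products. -/
def ClosedUnderProd (K : Set (Alg L)) : Prop :=
  ∀ (ι : Type u) (A : ι → Alg L), (∀ i, A i ∈ K) → Alg.pi A ∈ K

/-- Closure under finite direct products. -/
def ClosedUnderFinProd (K : Set (Alg L)) : Prop :=
  ∀ (ι : Type u), Finite ι → ∀ A : ι → Alg L, (∀ i, A i ∈ K) → Alg.pi A ∈ K

/-- Closure under homomorphic images. -/
def ClosedUnderHomImg (K : Set (Alg L)) : Prop :=
  ∀ A B : Alg L, A ∈ K → ∀ h : A.carrier →[L] B.carrier, Function.Surjective h → B ∈ K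

/-- Closure under ultraproducts. -/
def ClosedUnderUprod (K : Set (Alg L)) : Prop :=
  ∀ (ι : Type u) (F : Ultrafilter ι) (A : ι → Alg L), (∀ i, A i ∈ K) → Alg.uprod F A ∈ K

/-- A universal class: a class closed under isomorphic copies, subalgebras and ultraproducts. -/
def IsUniversalClass (K : Set (Alg L)) : Prop :=
  ClosedUnderIso K ∧ ClosedUnderSub K ∧ ClosedUnderUprod K

/-- A quasivariety: a class closed under isomorphic copies, subalgebras, direct products and
ultraproducts. -/
def IsQuasivariety (K : Set (Alg L)) : Prop :=
  ClosedUnderIso K ∧ ClosedUnderSub K ∧ ClosedUnderProd K ∧ ClosedUnderUprod K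

/-- A variety: a class closed under homomorphic images, subalgebras and direct products. -/
def IsVariety (K : Set (Alg L)) : Prop :=
  ClosedUnderHomImg K ∧ ClosedUnderSub K ∧ ClosedUnderProd K

/-- The least quasivariety containing `K`. -/
def QGen (K : Set (Alg L)) : Set (Alg L) :=
  ⋂₀ { M : Set (Alg L) | IsQuasivariety M ∧ K ⊆ M }

/-- The least variety containing `K`. -/
def VGen (K : Set (Alg L)) : Set (Alg L) :=
  ⋂₀ { M : Set (Alg L) | IsVariety M ∧ K ⊆ M }

/-- An elementary class: the class of all models of some first-order theory. -/
def IsElementary (K : Set (Alg L)) : Prop :=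
  ∃ T : L.Theory, ∀ A : Alg L, A ∈ K ↔ ∀ φ ∈ T, A.carrier ⊨ φ

/-- Finite conjunctions of equations (with `⊤` as the empty conjunction). -/
inductive IsConjEq {α : Type v} : ∀ {k : ℕ}, L.BoundedFormula α k → Prop
  | top {k} : IsConjEq (⊤ : L.BoundedFormula α k)
  | equal {k} (t₁ t₂ : L.Term (α ⊕ Fin k)) : IsConjEq (BoundedFormula.equal t₁ t₂)
  | inf {k} {φ ψ : L.BoundedFormula α k} : IsConjEq φ → IsConjEq ψ → IsConjEq (φ ⊓ ψ)

/-- Positive quantifier-free formulas: built from equations, `⊤` and `⊥` using `⊓` and `⊔`. -/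
inductive IsPosQF {α : Type v} : ∀ {k : ℕ}, L.BoundedFormula α k → Prop
  | falsum {k} : IsPosQF (⊥ : L.BoundedFormula α k)
  | top {k} : IsPosQF (⊤ : L.BoundedFormula α k)
  | equal {k} (t₁ t₂ : L.Term (α ⊕ Fin k)) : IsPosQF (BoundedFormula.equal t₁ t₂)
  | inf {k} {φ ψ : L.BoundedFormula α k} : IsPosQF φ → IsPosQF ψ → IsPosQF (φ ⊓ ψ)
  | sup {k} {φ ψ : L.BoundedFormula α k} : IsPosQF φ → IsPosQF ψ → IsPosQF (φ ⊔ ψ)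

/-- Primitive positive (pp) formulas: existentially quantified finite conjunctions of
equations. -/
inductive IsPP {α : Type v} : ∀ {k : ℕ}, L.BoundedFormula α k → Prop
  | of_conjEq {k} {φ : L.BoundedFormula α k} : IsConjEq φ → IsPP φ
  | ex {k} {φ : L.BoundedFormula α (k + 1)} : IsPP φ → IsPP φ.ex

/-- Existential positive formulas: existentially quantified positive quantifier-free
formulas. -/
inductive IsExistPos {α : Type v} : ∀ {k : ℕ}, L.BoundedFormula α k → Prop
  | of_posQF {k} {φ : L.BoundedFormula α k} : IsPosQF φ → IsExistPos φ
  | ex {k} {φ : L.BoundedFormula α (k + 1)} : IsExistPos φ → IsExistPos φ.ex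

/-- Two formulas are equivalent in a class of algebras. -/
def EquivOn (K : Set (Alg L)) {α : Type v} (φ ψ : L.Formula α) : Prop :=
  ∀ A : Alg L, A ∈ K → ∀ x : α → A.carrier, φ.Realize x ↔ ψ.Realize x

/-- A formula is preserved by homomorphisms in `K`. -/
def PreservedByHomsOn (K : Set (Alg L)) {α : Type v} (φ : L.Formula α) : Prop :=
  ∀ A B : Alg L, A ∈ K → B ∈ K → ∀ (h : A.carrier →[L] B.carrier) (x : α → A.carrier),
    φ.Realize x → φ.Realize fun a => h (x a)

/-- A formula is preserved by direct products in `K`. -/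
def PreservedByProdsOn (K : Set (Alg L)) {α : Type v} (φ : L.Formula α) : Prop :=
  ∀ (ι : Type u) (A : ι → Alg L), (∀ i, A i ∈ K) → ∀ x : α → (Alg.pi A).carrier,
    (∀ i, φ.Realize fun a => x a i) → φ.Realize x

/-- An `n`-ary partial function on a class of algebras `K`: a family assigning to each member of
`K` an `n`-ary partial function on its carrier. -/
def PartialFunOn (K : Set (Alg L)) (n : ℕ) :=
  ∀ (A : Alg L), A ∈ K → ((Fin n → A.carrier) →. A.carrier)

/-- A partial function on `K` is defined by the formula `φ(x₁, …, xₙ, y)` (the last variable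
being the output) when its graph on each member of `K` is the solution set of `φ`. -/
def DefinedBy {K : Set (Alg L)} {n : ℕ} (f : PartialFunOn K n)
    (φ : L.Formula (Fin (n + 1))) : Prop :=
  ∀ (A : Alg L) (hA : A ∈ K) (x : Fin n → A.carrier) (b : A.carrier),
    b ∈ f A hA x ↔ φ.Realize (Fin.snoc x b)

/-- The formula `φ(x₁, …, xₙ, y)` is functional in `K`: for all inputs there is at most one
output satisfying it. -/
def FunctionalIn (K : Set (Alg L)) {n : ℕ} (φ : L.Formula (Fin (n + 1))) : Prop :=
  ∀ A : Alg L, A ∈ K → ∀ (x : Fin n → A.carrier) (b₁ b₂ : A.carrier),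
    φ.Realize (Fin.snoc x b₁) → φ.Realize (Fin.snoc x b₂) → b₁ = b₂

/-- A partial function on `K` is an operation of `K` when it is preserved by all homomorphisms
between members of `K`. -/
def IsOperationOn {K : Set (Alg L)} {n : ℕ} (f : PartialFunOn K n) : Prop :=
  ∀ (A B : Alg L) (hA : A ∈ K) (hB : B ∈ K) (h : A.carrier →[L] B.carrier)
    (x : Fin n → A.carrier) (b : A.carrier),
    b ∈ f A hA x → h b ∈ f B hB fun i => h (x i)

/-- A partial function on `K` is implicit when it is defined by some formula. -/
def IsImplicit {K : Set (Alg L)} {n : ℕ} (f : PartialFunOn K n) : Prop :=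
  ∃ φ : L.Formula (Fin (n + 1)), DefinedBy f φ

/-- An implicit operation of `K`: a partial function that is both implicit and an operation. -/
def IsImplicitOp {K : Set (Alg L)} {n : ℕ} (f : PartialFunOn K n) : Prop :=
  IsImplicit f ∧ IsOperationOn f

/-- An implicit operation is extendable when every tuple in every member of `K` lies in the
domain of the operation in some extension inside `K`. -/
def Extendable {K : Set (Alg L)} {n : ℕ} (f : PartialFunOn K n) : Prop :=
  ∀ (A : Alg L) (hA : A ∈ K) (x : Fin n → A.carrier),
    ∃ (B : Alg L) (hB : B ∈ K) (e : A.carrier ↪[L] B.carrier),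
      (f B hB fun i => e (x i)).Dom

/-- The dominion of a subset `s` of `M` relative to the class `K`. -/
def dominion (K : Set (Alg L)) (M : Type u) [L.Structure M] (s : Set M) : Set M :=
  { b | ∀ C : Alg L, C ∈ K → ∀ g h : M →[L] C.carrier, (∀ a ∈ s, g a = h a) → g b = h b }

/-- The strong epimorphism surjectivity property. -/
def StrongES (K : Set (Alg L)) : Prop :=
  ∀ (A B : Alg L), A ∈ K → B ∈ K → ∀ (f : A.carrier →[L] B.carrier) (b : B.carrier),
    b ∉ Set.range f →
      ∃ C : Alg L, C ∈ K ∧ ∃ g h : B.carrier →[L] C.carrier,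
        (∀ a : A.carrier, g (f a) = h (f a)) ∧ g b ≠ h b

/-- The weak epimorphism surjectivity property: every `K`-epimorphism between finitely
generated members of `K` is surjective. -/
def WeakES (K : Set (Alg L)) : Prop :=
  ∀ (A B : Alg L), A ∈ K → B ∈ K →
    Structure.FG L A.carrier → Structure.FG L B.carrier →
      ∀ f : A.carrier →[L] B.carrier,
        (∀ C : Alg L, C ∈ K → ∀ g h : B.carrier →[L] C.carrier,
          (∀ a : A.carrier, g (f a) = h (f a)) → g = h) →
        Function.Surjective f

/-- The amalgamation property. -/
def HasAmalgamation (K : Set (Alg L)) : Prop :=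
  ∀ (A B C : Alg L), A ∈ K → B ∈ K → C ∈ K →
    ∀ (f : A.carrier ↪[L] B.carrier) (g : A.carrier ↪[L] C.carrier),
      ∃ D : Alg L, D ∈ K ∧ ∃ (f' : B.carrier ↪[L] D.carrier) (g' : C.carrier ↪[L] D.carrier),
        ∀ a : A.carrier, f' (f a) = g' (g a)

/-- A finitely presented member of `K`: an algebra in `K` with a finite presentation, phrased
through the usual universal property of `T(X)/Cg_K(Y)`. -/
def FinitelyPresentedIn (K : Set (Alg L)) (B : Alg L) : Prop :=
  B ∈ K ∧ ∃ (m : ℕ) (Y : Finset (L.Term (Fin m) × L.Term (Fin m))) (b : Fin m → B.carrier),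
    Substructure.closure L (Set.range b) = ⊤ ∧
    (∀ p ∈ Y, p.1.realize b = p.2.realize b) ∧
    ∀ C : Alg L, C ∈ K → ∀ x : Fin m → C.carrier,
      (∀ p ∈ Y, p.1.realize x = p.2.realize x) →
        ∃ g : B.carrier →[L] C.carrier, ∀ i, g (b i) = x i

/-- Subdirectly irreducible relative to `K`. -/
def IsRSI (K : Set (Alg L)) (A : Alg L) : Prop :=
  A ∈ K ∧ ∀ (ι : Type u) (B : ι → Alg L), (∀ i, B i ∈ K) →
    ∀ h : A.carrier ↪[L] (Alg.pi B).carrier,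
      (∀ i, Function.Surjective fun a => h a i) →
        ∃ i, Function.Bijective fun a => h a i

/-- Finitely subdirectly irreducible relative to `K`. -/
def IsRFSI (K : Set (Alg L)) (A : Alg L) : Prop :=
  A ∈ K ∧ ∀ (ι : Type u), Finite ι → ∀ B : ι → Alg L, (∀ i, B i ∈ K) →
    ∀ h : A.carrier ↪[L] (Alg.pi B).carrier,
      (∀ i, Function.Surjective fun a => h a i) →
        ∃ i, Function.Bijective fun a => h a i

/-- A congruence on an algebra: an equivalence relation compatible with all the operations. -/
def IsCongruenceOn (A : Alg L) (θ : A.carrier → A.carrier → Prop) : Prop :=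
  Equivalence θ ∧
    ∀ (k : ℕ) (f : L.Functions k) (x y : Fin k → A.carrier),
      (∀ i, θ (x i) (y i)) → θ (Structure.funMap f x) (Structure.funMap f y)

/-- The quotient of an algebra by (the setoid of) an equivalence relation; when the relation is
a congruence this is the quotient algebra. -/
noncomputable def Alg.quot (A : Alg L) (θ : A.carrier → A.carrier → Prop) (h : Equivalence θ) :
    Alg L where
  carrier := Quotient (⟨θ, h⟩ : Setoid A.carrier)
  str :=
    { funMap := fun {k} f v => Quotient.mk _ (Structure.funMap f fun i => (v i).out)
      RelMap := fun {k} r v => Structure.RelMap r fun i => (v i).out }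

/-- A `K`-congruence of `A`: a congruence whose quotient lies in `K`. -/
def IsRelCong (K : Set (Alg L)) (A : Alg L) (θ : A.carrier → A.carrier → Prop) : Prop :=
  ∃ h : IsCongruenceOn A θ, Alg.quot A θ h.1 ∈ K

/-- The join of two relations in the lattice of `K`-congruences of `A`. -/
def relCongJoin (K : Set (Alg L)) (A : Alg L)
    (θ φ : A.carrier → A.carrier → Prop) (x y : A.carrier) : Prop :=
  ∀ ρ : A.carrier → A.carrier → Prop, IsRelCong K A ρ →
    (∀ a b, θ a b → ρ a b) → (∀ a b, φ a b → ρ a b) → ρ x y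

/-- Relative congruence distributivity: the lattice of `K`-congruences of each member of `K`
is distributive. -/
def RelCongDistributive (K : Set (Alg L)) : Prop :=
  ∀ A : Alg L, A ∈ K → ∀ θ φ ψ : A.carrier → A.carrier → Prop,
    IsRelCong K A θ → IsRelCong K A φ → IsRelCong K A ψ →
      ∀ x y : A.carrier,
        (θ x y ∧ relCongJoin K A φ ψ x y) ↔
          relCongJoin K A (fun a b => θ a b ∧ φ a b) (fun a b => θ a b ∧ ψ a b) x y

/-- The join of two relations in the lattice of congruences of `A`. -/
def congJoin (A : Alg L) (θ φ : A.carrier → A.carrier → Prop) (x y : A.carrier) : Prop :=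
  ∀ ρ : A.carrier → A.carrier → Prop, IsCongruenceOn A ρ →
    (∀ a b, θ a b → ρ a b) → (∀ a b, φ a b → ρ a b) → ρ x y

/-- Congruence permutability for all members of a class. -/
def CongPermutableClass (K : Set (Alg L)) : Prop :=
  ∀ A : Alg L, A ∈ K → ∀ θ φ : A.carrier → A.carrier → Prop,
    IsCongruenceOn A θ → IsCongruenceOn A φ →
      ∀ x y : A.carrier, (∃ z, θ x z ∧ φ z y) ↔ ∃ z, φ x z ∧ θ z y

/-- Congruence distributivity for all members of a class. -/
def CongDistributiveClass (K : Set (Alg L)) : Prop :=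
  ∀ A : Alg L, A ∈ K → ∀ θ φ ψ : A.carrier → A.carrier → Prop,
    IsCongruenceOn A θ → IsCongruenceOn A φ → IsCongruenceOn A ψ →
      ∀ x y : A.carrier,
        (θ x y ∧ congJoin A φ ψ x y) ↔
          congJoin A (fun a b => θ a b ∧ φ a b) (fun a b => θ a b ∧ ψ a b) x y

/-- The congruence extension property. -/
def HasCEP (K : Set (Alg L)) : Prop :=
  ∀ A B : Alg L, A ∈ K → B ∈ K → ∀ e : A.carrier ↪[L] B.carrier,
    ∀ θ : A.carrier → A.carrier → Prop, IsCongruenceOn A θ →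
      ∃ ρ : B.carrier → B.carrier → Prop, IsCongruenceOn B ρ ∧
        ∀ x y : A.carrier, θ x y ↔ ρ (e x) (e y)

/-- The language consisting of one new function symbol `gᵢ` of arity `ar i` for each `i`. -/
def newLang {ι : Type u} (ar : ι → ℕ) : FirstOrder.Language.{u, u} where
  Functions := fun n => { i : ι // ar i = n }
  Relations := fun _ => PEmpty

/-- The `L`-reduct of an algebra in an expanded language `L.sum N`. -/
def algReduct {N : FirstOrder.Language.{u, u}} (B : Alg (L.sum N)) : Alg L where
  carrier := B.carrier
  str := (LHom.sumInl : L →ᴸ L.sum N).reduct B.carrier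

/-- The class `K[L_F]` of expansions of members of `K` on which each operation in the family
`f` is total, interpreting the new symbol `gᵢ` as `f i`. -/
def expClass (K : Set (Alg L)) {ι : Type u} (ar : ι → ℕ)
    (f : ∀ i, PartialFunOn K (ar i)) : Set (Alg (L.sum (newLang ar))) :=
  { B | ∃ hB : algReduct B ∈ K,
      ∀ (i : ι) (x : Fin (ar i) → B.carrier),
        Structure.funMap (L := L.sum (newLang ar)) (M := B.carrier)
            (Sum.inr ⟨i, rfl⟩ : (L.sum (newLang ar)).Functions (ar i)) x
          ∈ f i (algReduct B) hB x }

/-- Closure under subalgebras (and isomorphic copies) inside a fixed language. -/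
def SClosure {L' : FirstOrder.Language.{u, u}} (S : Set (Alg L')) : Set (Alg L') :=
  { A | ∃ B ∈ S, Nonempty (A.carrier ↪[L'] B.carrier) }

/-- Membership in `ext_pp(K)`: an extendable implicit operation defined by a pp formula. -/
def InExtPP {K : Set (Alg L)} {n : ℕ} (f : PartialFunOn K n) : Prop :=
  IsOperationOn f ∧ (∃ φ : L.Formula (Fin (n + 1)), IsPP φ ∧ DefinedBy f φ) ∧ Extendable f

/-- `M` is the pp expansion of `K` induced by the family `f` of extendable pp-definable
implicit operations, with one new symbol of arity `ar i` for each `i`. -/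
def IsPPExpansionVia (K : Set (Alg L)) {ι : Type u} (ar : ι → ℕ)
    (f : ∀ i, PartialFunOn K (ar i)) (M : Set (Alg (L.sum (newLang ar)))) : Prop :=
  (∀ i, 0 < ar i) ∧ (∀ i, InExtPP (f i)) ∧ M = SClosure (expClass K ar f)

/-- Every implicit operation of `K` is interpolated in `M` by a set of terms of the expanded
language. -/
def InterpolatesByTermsInExp (K : Set (Alg L)) {ι : Type u} {ar : ι → ℕ}
    (M : Set (Alg (L.sum (newLang ar)))) : Prop :=
  ∀ n : ℕ, 0 < n → ∀ g : PartialFunOn K n, IsImplicitOp g →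
    ∃ T : Set ((L.sum (newLang ar)).Term (Fin n)),
      ∀ A : Alg (L.sum (newLang ar)), A ∈ M →
        ∀ (hA : algReduct A ∈ K) (x : Fin n → A.carrier) (b : A.carrier),
          b ∈ g (algReduct A) hA x → ∃ t ∈ T, t.realize x = b

/-- `M` is a Beth companion of `K` (via the given expansion datum). -/
def IsBethCompanionVia (K : Set (Alg L)) {ι : Type u} (ar : ι → ℕ)
    (f : ∀ i, PartialFunOn K (ar i)) (M : Set (Alg (L.sum (newLang ar)))) : Prop :=
  IsPPExpansionVia K ar f M ∧ InterpolatesByTermsInExp K M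

/-- A pp expansion is congruence preserving when the `M`-congruences of each member of `M`
coincide with the `K`-congruences of its `L`-reduct. -/
def CongPreserving {N : FirstOrder.Language.{u, u}} (K : Set (Alg L))
    (M : Set (Alg (L.sum N))) : Prop :=
  ∀ A : Alg (L.sum N), A ∈ M → ∀ θ : A.carrier → A.carrier → Prop,
    IsRelCong M A θ ↔ IsRelCong K (algReduct A) θ

/-- Reinterpretation of an `L₁`-algebra as an `L₂`-algebra along a map sending `L₂`-symbols to
`L₁`-terms (both languages are assumed to be purely functional). -/
def reinterpret {L₁ L₂ : FirstOrder.Language.{u, u}} (ρ : ∀ n, L₂.Functions n → L₁.Term (Fin n))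
    (A : Alg L₁) : Alg L₂ where
  carrier := A.carrier
  str :=
    { funMap := fun {k} s x => (ρ k s).realize x
      RelMap := fun {k} _ _ => False }

/-- Two expansions of the same base language `L` are faithfully term equivalent relative to
`L`. -/
def FaithfullyTermEquivRel (L : FirstOrder.Language.{u, u}) {N₁ N₂ : FirstOrder.Language.{u, u}}
    (M₁ : Set (Alg (L.sum N₁))) (M₂ : Set (Alg (L.sum N₂))) : Prop :=
  ∃ (τ : ∀ n, (L.sum N₁).Functions n → (L.sum N₂).Term (Fin n))
    (ρ : ∀ n, (L.sum N₂).Functions n → (L.sum N₁).Term (Fin n)),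
    (∀ (n : ℕ) (s : L.Functions n),
      τ n (Sum.inl s) = Term.func (Sum.inl s : (L.sum N₂).Functions n) Term.var) ∧
    (∀ (n : ℕ) (s : L.Functions n),
      ρ n (Sum.inl s) = Term.func (Sum.inl s : (L.sum N₁).Functions n) Term.var) ∧
    (∀ A : Alg (L.sum N₁), A ∈ M₁ → reinterpret ρ A ∈ M₂) ∧
    (∀ B : Alg (L.sum N₂), B ∈ M₂ → reinterpret τ B ∈ M₁) ∧
    (∀ A : Alg (L.sum N₁), A ∈ M₁ → reinterpret τ (reinterpret ρ A) = A) ∧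
    (∀ B : Alg (L.sum N₂), B ∈ M₂ → reinterpret ρ (reinterpret τ B) = B)

section Helpers

instance newLang_isAlgebraic {ι : Type u} (ar : ι → ℕ) : (newLang ar).IsAlgebraic :=
  fun _ => inferInstanceAs (IsEmpty PEmpty)

/-- The quotient map. -/
def qmk (A : Alg L) (θ : A.carrier → A.carrier → Prop) (h : Equivalence θ) (x : A.carrier) :
    (Alg.quot A θ h).carrier :=
  Quotient.mk (⟨θ, h⟩ : Setoid A.carrier) x

theorem qmk_eq (A : Alg L) (θ : A.carrier → A.carrier → Prop) (h : Equivalence θ)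
    (x y : A.carrier) : qmk A θ h x = qmk A θ h y ↔ θ x y :=
  Quotient.eq (r := (⟨θ, h⟩ : Setoid A.carrier))

theorem qmk_surj (A : Alg L) (θ : A.carrier → A.carrier → Prop) (h : Equivalence θ) :
    Function.Surjective (qmk A θ h) := by
  intro q
  obtain ⟨x, hx⟩ := Quotient.exists_rep q
  exact ⟨x, hx⟩

theorem qmk_funMap (A : Alg L) (θ : A.carrier → A.carrier → Prop) (h : IsCongruenceOn A θ)
    {k : ℕ} (f : L.Functions k) (x : Fin k → A.carrier) :
    Structure.funMap f (fun i => qmk A θ h.1 (x i)) = qmk A θ h.1 (Structure.funMap f x) := by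
  refine (qmk_eq A θ h.1 _ _).2 (h.2 k f _ _ fun i => ?_)
  exact Quotient.exact (s := (⟨θ, h.1⟩ : Setoid A.carrier)) (Quotient.out_eq _)

/-- Homomorphism from a compatible function. -/
def mkHom [L.IsAlgebraic] {M N : Type u} [L.Structure M] [L.Structure N] (g : M → N)
    (hg : ∀ (k : ℕ) (f : L.Functions k) (x : Fin k → M),
      g (Structure.funMap f x) = Structure.funMap f fun i => g (x i)) : M →[L] N where
  toFun := g
  map_fun' := fun {k} f x => hg k f x
  map_rel' := fun {_} r _ => isEmptyElim r

@[simp] theorem mkHom_apply [L.IsAlgebraic] {M N : Type u} [L.Structure M] [L.Structure N]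
    (g : M → N) (hg) (x : M) : (mkHom (L := L) g hg) x = g x := rfl

theorem nonempty_emb [L.IsAlgebraic] {M N : Type u} [L.Structure M] [L.Structure N] (g : M → N)
    (hg : ∀ (k : ℕ) (f : L.Functions k) (x : Fin k → M),
      g (Structure.funMap f x) = Structure.funMap f fun i => g (x i))
    (hi : Function.Injective g) : Nonempty (M ↪[L] N) :=
  ⟨Embedding.ofInjective (f := mkHom g hg) hi⟩

theorem hom_funMap {M N : Type u} [L.Structure M] [L.Structure N] (g : M →[L] N)
    {k : ℕ} (f : L.Functions k) (x : Fin k → M) :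
    g (Structure.funMap f x) = Structure.funMap f fun i => g (x i) :=
  g.map_fun f x

theorem emb_funMap {M N : Type u} [L.Structure M] [L.Structure N] (g : M ↪[L] N)
    {k : ℕ} (f : L.Functions k) (x : Fin k → M) :
    g (Structure.funMap f x) = Structure.funMap f fun i => g (x i) :=
  g.map_fun f x

theorem pi_funMap {ι : Type u} (A : ι → Alg L) {k : ℕ} (f : L.Functions k)
    (x : Fin k → (Alg.pi A).carrier) (i : ι) :
    (Structure.funMap f x : (Alg.pi A).carrier) i = Structure.funMap f fun j => x j i := rfl

/-- Congruence given as the kernel of a homomorphism. -/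
theorem isCong_ker {A C : Alg L} (g : A.carrier → C.carrier)
    (hg : ∀ (k : ℕ) (f : L.Functions k) (x : Fin k → A.carrier),
      g (Structure.funMap f x) = Structure.funMap f fun i => g (x i)) :
    IsCongruenceOn A (fun x y => g x = g y) := by
  refine ⟨⟨fun _ => rfl, fun h => h.symm, fun h h' => h.trans h'⟩, ?_⟩
  intro k f x y h
  rw [hg, hg]
  exact congrArg _ (funext h)

theorem relCong_ker [L.IsAlgebraic] {K : Set (Alg L)} (hS : ClosedUnderSub K)
    {A C : Alg L} (hC : C ∈ K) (g : A.carrier → C.carrier)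
    (hg : ∀ (k : ℕ) (f : L.Functions k) (x : Fin k → A.carrier),
      g (Structure.funMap f x) = Structure.funMap f fun i => g (x i)) :
    IsRelCong K A (fun x y => g x = g y) := by
  have hc := isCong_ker g hg
  refine ⟨hc, hS _ C hC ?_⟩
  let q : (Alg.quot A _ hc.1).carrier → C.carrier :=
    Quotient.lift (s := (⟨_, hc.1⟩ : Setoid A.carrier)) g fun _ _ h => h
  have hq : ∀ x, q (qmk A _ hc.1 x) = g x := fun _ => rfl
  refine nonempty_emb q ?_ ?_
  · intro k f x
    choose y hy using fun i => qmk_surj A _ hc.1 (x i)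
    obtain rfl : (fun i => qmk A _ hc.1 (y i)) = x := funext hy
    rw [qmk_funMap A _ hc, hq, hg]
    rfl
  · intro a b hab
    obtain ⟨a, rfl⟩ := qmk_surj A _ hc.1 a
    obtain ⟨b, rfl⟩ := qmk_surj A _ hc.1 b
    exact (qmk_eq A _ hc.1 _ _).2 hab

theorem relCong_sInf [L.IsAlgebraic] {K : Set (Alg L)} (hS : ClosedUnderSub K)
    (hP : ClosedUnderProd K) {A : Alg L} (Φ : Set (A.carrier → A.carrier → Prop))
    (hΦ : ∀ ρ ∈ Φ, IsRelCong K A ρ) :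
    IsRelCong K A (fun x y => ∀ ρ ∈ Φ, ρ x y) := by
  let C : Alg L := Alg.pi fun ρ : Φ => Alg.quot A ρ.1 (hΦ ρ.1 ρ.2).choose.1
  have hC : C ∈ K := hP _ _ fun ρ => (hΦ ρ.1 ρ.2).choose_spec
  have := relCong_ker hS (A := A) hC (fun x ρ => qmk A ρ.1 (hΦ ρ.1 ρ.2).choose.1 x) (by
    intro k f x
    funext ρ
    exact (qmk_funMap A ρ.1 (hΦ ρ.1 ρ.2).choose f x).symm)
  convert this using 3 with x y
  constructor
  · intro h
    funext ρ
    exact (qmk_eq _ _ _ _ _).2 (h ρ.1 ρ.2)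
  · intro h ρ hρ
    exact (qmk_eq _ _ _ _ _).1 (congrFun h ⟨ρ, hρ⟩)

theorem relCong_join [L.IsAlgebraic] {K : Set (Alg L)} (hS : ClosedUnderSub K)
    (hP : ClosedUnderProd K) {A : Alg L} (θ φ : A.carrier → A.carrier → Prop) :
    IsRelCong K A (relCongJoin K A θ φ) := by
  convert relCong_sInf hS hP (A := A)
    {ρ | IsRelCong K A ρ ∧ (∀ a b, θ a b → ρ a b) ∧ (∀ a b, φ a b → ρ a b)} (fun ρ h => h.1)
    using 3 with x y
  simp only [relCongJoin, Set.mem_ofPred_eq, and_imp]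

theorem rfsi_iff [L.IsAlgebraic] {K : Set (Alg L)} (hS : ClosedUnderSub K) (A : Alg L) :
    IsRFSI K A ↔ A ∈ K ∧ ∀ ι : Type u, Finite ι → ∀ ρ : ι → A.carrier → A.carrier → Prop,
      (∀ i, IsRelCong K A (ρ i)) → (∀ x y, (∀ i, ρ i x y) → x = y) →
        ∃ i, ∀ x y, ρ i x y → x = y := by
  refine and_congr_right fun hA => ⟨fun h ι hι ρ hρ hinj => ?_, fun h ι hι B hB e he => ?_⟩
  · choose hc hq using hρ
    let m : A.carrier → (Alg.pi fun i => Alg.quot A (ρ i) (hc i).1).carrier :=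
      fun x i => qmk A (ρ i) (hc i).1 x
    have hg : ∀ (k : ℕ) (f : L.Functions k) (x : Fin k → A.carrier),
        m (Structure.funMap f x) = Structure.funMap f fun j => m (x j) := by
      intro k f x
      funext i
      exact (qmk_funMap A _ (hc i) f x).symm
    have hi : Function.Injective (mkHom (L := L) m hg) := by
      intro x y hxy
      exact hinj x y fun i => (qmk_eq A _ (hc i).1 _ _).1 (congrFun hxy i)
    obtain ⟨i, hb⟩ := h ι hι _ hq (Embedding.ofInjective hi) fun i => qmk_surj A _ (hc i).1
    refine ⟨i, fun x y hxy => hb.1 ((qmk_eq A _ (hc i).1 _ _).2 hxy)⟩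
  · obtain ⟨i, hi⟩ := h ι hι (fun i x y => e x i = e y i)
      (fun i => relCong_ker hS (hB i) (fun x => e x i) (by
        intro k f x
        rw [emb_funMap]
        rfl))
      (fun x y hxy => e.injective (funext hxy))
    exact ⟨i, fun x y hxy => hi x y hxy, he i⟩

/-- Compactness for equational consequence in a class closed under ultraproducts. -/
theorem compactness {K : Set (Alg L)} (hU : ClosedUnderUprod K) {J X : Type u}
    (E : J → L.Term X × L.Term X) (e : L.Term X × L.Term X)
    (h : ∀ C : Alg L, C ∈ K → ∀ v : X → C.carrier,
      (∀ j, (E j).1.realize v = (E j).2.realize v) → e.1.realize v = e.2.realize v) :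
    ∃ J0 : Finset J, ∀ C : Alg L, C ∈ K → ∀ v : X → C.carrier,
      (∀ j ∈ J0, (E j).1.realize v = (E j).2.realize v) → e.1.realize v = e.2.realize v := by
  classical
  by_contra hcon
  push Not at hcon
  choose C hC v hv hne using hcon
  let F : Ultrafilter (Finset J) := Ultrafilter.of Filter.atTop
  let w : X → (Alg.uprod F C).carrier := fun x =>
    ((fun i => v i x : ∀ i, (C i).carrier) : Filter.Product (F : Filter (Finset J)) _)
  have key : ∀ t : L.Term X, t.realize w =
      ((fun i => t.realize (v i) : ∀ i, (C i).carrier) :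
        Filter.Product (F : Filter (Finset J)) _) := fun t =>
    Ultraproduct.term_realize_cast (fun x i => v i x) t
  have h1 := h _ (hU _ F C hC) w (by
    intro j
    rw [key, key]
    refine Quotient.sound ?_
    have : ∀ᶠ i in (F : Filter (Finset J)), j ∈ i := by
      refine Ultrafilter.of_le Filter.atTop ?_
      refine Filter.mem_atTop_sets.2 ⟨{j}, fun b hb => ?_⟩
      exact hb (Finset.mem_singleton_self j)
    exact this.mono fun i hi => hv i j hi)
  rw [key, key] at h1
  have h2 : ∀ᶠ i in (F : Filter (Finset J)), e.1.realize (v i) = e.2.realize (v i) :=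
    Quotient.exact h1
  obtain ⟨i, hi⟩ := h2.exists
  exact hne i hi

/-- Unions of nonempty chains of relative congruences. -/
theorem relCong_chain [L.IsAlgebraic] {K : Set (Alg L)} (hK : IsQuasivariety K) {A : Alg L}
    (c : Set (A.carrier → A.carrier → Prop)) (hc : IsChain (· ≤ ·) c) (hne : c.Nonempty)
    (hΦ : ∀ ρ ∈ c, IsRelCong K A ρ) :
    IsRelCong K A (fun x y => ∃ ρ ∈ c, ρ x y) := by
  classical
  obtain ⟨-, hS, hP, hU⟩ := hK
  have main := relCong_sInf hS hP (A := A)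
    {ρ | IsRelCong K A ρ ∧ ∀ σ ∈ c, σ ≤ ρ} (fun ρ h => h.1)
  convert main using 3 with x y
  constructor
  · rintro ⟨ρ, hρ, h⟩ σ hσ
    exact hσ.2 ρ hρ x y h
  intro hxy
  let D := Σ k : ℕ, L.Functions k × (Fin k → A.carrier)
  let E : D ⊕ {p : A.carrier × A.carrier // ∃ ρ ∈ c, ρ p.1 p.2} →
      L.Term A.carrier × L.Term A.carrier :=
    Sum.elim (fun d => (Term.func d.2.1 fun i => Term.var (d.2.2 i),
        Term.var (Structure.funMap d.2.1 d.2.2)))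
      (fun p => (Term.var p.1.1, Term.var p.1.2))
  obtain ⟨J0, hJ⟩ := compactness hU E (Term.var x, Term.var y) (by
    intro C hC v hv
    have hk := relCong_ker hS (A := A) hC v (fun k f x => (hv (Sum.inl ⟨k, f, x⟩)).symm)
    exact hxy _ ⟨hk, fun σ hσ a b hab => hv (Sum.inr ⟨(a, b), σ, hσ, hab⟩)⟩)
  have hfin : ∃ ρ ∈ c, ∀ p, Sum.inr p ∈ J0 → ρ p.1.1 p.1.2 := by
    clear hJ
    induction J0 using Finset.induction_on with
    | empty =>
      obtain ⟨ρ, hρ⟩ := hne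
      exact ⟨ρ, hρ, fun p hp => by simp at hp⟩
    | insert j J0 _ ih =>
      obtain ⟨ρ, hρ, h⟩ := ih
      rcases j with d | ⟨p, σ, hσ, hp⟩
      · exact ⟨ρ, hρ, fun p hp => h p (by simpa using hp)⟩
      · rcases hc.total hρ hσ with hle | hle
        · refine ⟨σ, hσ, fun q hq => ?_⟩
          rcases Finset.mem_insert.1 hq with hq | hq
          · obtain rfl := Sum.inr_injective hq
            exact hp
          · exact hle _ _ (h q hq)
        · refine ⟨ρ, hρ, fun q hq => ?_⟩
          rcases Finset.mem_insert.1 hq with hq | hq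
          · obtain rfl := Sum.inr_injective hq
            exact hle _ _ hp
          · exact h q hq
  obtain ⟨ρ, hρ, h⟩ := hfin
  refine ⟨ρ, hρ, ?_⟩
  obtain ⟨hcg, hq⟩ := hΦ ρ hρ
  refine (qmk_eq A ρ hcg.1 x y).1 (hJ _ hq (qmk A ρ hcg.1) ?_)
  rintro (⟨k, f, x⟩ | p) hj
  · exact qmk_funMap A ρ hcg f x
  · exact (qmk_eq A ρ hcg.1 _ _).2 (h p hj)

theorem exists_rfsi_sep [L.IsAlgebraic] {K : Set (Alg L)} (hK : IsQuasivariety K) {A : Alg L}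
    (hA : A ∈ K) (x y : A.carrier) (hxy : x ≠ y) :
    ∃ C : Alg L, IsRFSI K C ∧ ∃ g : A.carrier →[L] C.carrier, g x ≠ g y := by
  have hS := hK.2.1
  obtain ⟨ρ, -, hmax⟩ := zorn_le_nonempty₀
    {ρ : A.carrier → A.carrier → Prop | IsRelCong K A ρ ∧ ¬ ρ x y} (by
      intro c hc hch ρ hρ
      refine ⟨fun x y => ∃ ρ ∈ c, ρ x y,
        ⟨relCong_chain hK c hch ⟨ρ, hρ⟩ fun σ hσ => (hc hσ).1, ?_⟩, ?_⟩
      · rintro ⟨σ, hσ, h⟩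
        exact (hc hσ).2 h
      · intro σ hσ a b h
        exact ⟨σ, hσ, h⟩)
    (fun a b => a = b)
    ⟨relCong_ker hS hA (fun x => x) (fun _ _ _ => rfl), hxy⟩
  obtain ⟨⟨hc, hq⟩, hn⟩ := hmax.1
  refine ⟨Alg.quot A ρ hc.1, (rfsi_iff hS _).2 ⟨hq, ?_⟩,
    mkHom (qmk A ρ hc.1) (fun k f x => (qmk_funMap A ρ hc f x).symm),
    fun h => hn ((qmk_eq A ρ hc.1 x y).1 h)⟩
  intro ι _ σ hσ hinj
  have : ∃ i, ¬ σ i (qmk A ρ hc.1 x) (qmk A ρ hc.1 y) := by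
    by_contra hcon
    push Not at hcon
    exact hn ((qmk_eq A ρ hc.1 x y).1 (hinj _ _ hcon))
  obtain ⟨i, hi⟩ := this
  refine ⟨i, ?_⟩
  obtain ⟨hci, hqi⟩ := hσ i
  have hk := relCong_ker hS (A := A) hqi (fun a => qmk _ (σ i) hci.1 (qmk A ρ hc.1 a)) (by
    intro k f x
    rw [← qmk_funMap A ρ hc, ← qmk_funMap _ (σ i) hci])
  have hle := hmax.2 (y := fun a b => qmk _ (σ i) hci.1 (qmk A ρ hc.1 a) =
      qmk _ (σ i) hci.1 (qmk A ρ hc.1 b)) ⟨hk, fun h => hi ((qmk_eq _ _ _ _ _).1 h)⟩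
    (fun a b hab => congrArg _ ((qmk_eq A ρ hc.1 a b).2 hab))
  intro a b hab
  obtain ⟨a, rfl⟩ := qmk_surj A _ hc.1 a
  obtain ⟨b, rfl⟩ := qmk_surj A _ hc.1 b
  exact (qmk_eq A ρ hc.1 a b).2 (hle a b ((qmk_eq _ _ _ _ _).2 hab))

theorem pi_realize {ι : Type u} (A : ι → Alg L) {α : Type v} (t : L.Term α)
    (x : α → (Alg.pi A).carrier) (i : ι) :
    (t.realize x : (Alg.pi A).carrier) i = t.realize fun a => x a i := by
  induction t with
  | var a => rfl
  | func f ts ih =>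
    simp only [Term.realize]
    rw [pi_funMap]
    exact congrArg _ (funext ih)

theorem elim_coord {ι : Type u} (A : ι → Alg L) {α : Type v} {k : ℕ}
    (x : α → (Alg.pi A).carrier) (xs : Fin k → (Alg.pi A).carrier) (i : ι) :
    (fun a => (Sum.elim x xs a) i) = Sum.elim (fun a => x a i) (fun j => xs j i) := by
  funext a
  cases a <;> rfl

theorem snoc_coord {ι : Type u} (A : ι → Alg L) {k : ℕ}
    (xs : Fin k → (Alg.pi A).carrier) (b : (Alg.pi A).carrier) (i : ι) :
    (fun a => (Fin.snoc xs b : Fin (k + 1) → (Alg.pi A).carrier) a i) =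
      (Fin.snoc (fun j => xs j i) (b i) : Fin (k + 1) → (A i).carrier) := by
  funext j
  refine Fin.lastCases ?_ (fun j => ?_) j
  · exact (congrFun (Fin.snoc_last (α := fun _ => (Alg.pi A).carrier) b xs) i).trans
      (Fin.snoc_last (α := fun _ => (A i).carrier) _ _).symm
  · exact (congrFun (Fin.snoc_castSucc (α := fun _ => (Alg.pi A).carrier) b xs j) i).trans
      (Fin.snoc_castSucc (α := fun _ => (A i).carrier) (b i) (fun j => xs j i) j).symm

theorem conjEq_pi {ι : Type u} (A : ι → Alg L) {α : Type v} {k : ℕ}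
    {φ : L.BoundedFormula α k} (hφ : IsConjEq φ) :
    ∀ (x : α → (Alg.pi A).carrier) (xs : Fin k → (Alg.pi A).carrier),
      (∀ i, φ.Realize (fun a => x a i) (fun j => xs j i)) → φ.Realize x xs := by
  induction hφ with
  | top => intro x xs _; simp
  | equal t₁ t₂ =>
    intro x xs h
    simp only [BoundedFormula.Realize] at h ⊢
    funext i
    rw [pi_realize, pi_realize, elim_coord]
    exact h i
  | inf _ _ ih₁ ih₂ =>
    intro x xs h
    simp only [BoundedFormula.realize_inf] at h ⊢
    exact ⟨ih₁ x xs fun i => (h i).1, ih₂ x xs fun i => (h i).2⟩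

theorem pp_pi {ι : Type u} (A : ι → Alg L) {α : Type v} {k : ℕ}
    {φ : L.BoundedFormula α k} (hφ : IsPP φ) :
    ∀ (x : α → (Alg.pi A).carrier) (xs : Fin k → (Alg.pi A).carrier),
      (∀ i, φ.Realize (fun a => x a i) (fun j => xs j i)) → φ.Realize x xs := by
  induction hφ with
  | of_conjEq h => exact conjEq_pi A h
  | ex _ ih =>
    intro x xs h
    simp only [BoundedFormula.realize_ex] at h ⊢
    choose b hb using h
    refine ⟨(b : (Alg.pi A).carrier), ih _ _ fun i => ?_⟩
    rw [snoc_coord A xs b i]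
    exact hb i

theorem expClass_pi {K : Set (Alg L)} (hP : ClosedUnderProd K) {ι : Type u} {ar : ι → ℕ}
    {f : ∀ i, PartialFunOn K (ar i)} (hf : ∀ i, InExtPP (f i)) {κ : Type u}
    (B : κ → Alg (L.sum (newLang ar))) (hB : ∀ k, B k ∈ expClass K ar f) :
    Alg.pi B ∈ expClass K ar f := by
  choose hR hfun using hB
  have hPi : Alg.pi (fun k => algReduct (B k)) ∈ K := hP _ _ hR
  have hPi' : algReduct (Alg.pi B) ∈ K := hPi
  refine ⟨hPi', fun i x => ?_⟩
  obtain ⟨-, ⟨φ, hpp, hdef⟩, -⟩ := hf i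
  refine (hdef _ hPi' x _).2 ?_
  refine pp_pi (fun k => algReduct (B k)) hpp _ _ fun k => ?_
  have := (hdef _ (hR k) _ _).1 (hfun k i fun j => x j k)
  unfold Formula.Realize at this
  have hsn := snoc_coord (fun k => algReduct (B k)) x (Structure.funMap
    (L := L.sum (newLang ar)) (M := (Alg.pi B).carrier)
    (Sum.inr ⟨i, rfl⟩ : (L.sum (newLang ar)).Functions (ar i)) x) k
  have h3 : BoundedFormula.Realize (M := (algReduct (B k)).carrier) φ _
      (fun j : Fin 0 => (default : Fin 0 → (Alg.pi B).carrier) j k) :=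
    (congrArg (fun z => BoundedFormula.Realize (M := (algReduct (B k)).carrier) φ _ z)
      (Subsingleton.elim _ _)).mp this
  exact (congrArg (fun z => BoundedFormula.Realize (M := (algReduct (B k)).carrier) φ z
    (fun j : Fin 0 => (default : Fin 0 → (Alg.pi B).carrier) j k)) hsn).mpr h3

theorem prime_step [L.IsAlgebraic] {K : Set (Alg L)} (hK : IsQuasivariety K)
    (hRCD : RelCongDistributive K)
    (hsub : ∀ A B : Alg L, IsRFSI K B → Nonempty (A.carrier ↪[L] B.carrier) →
      (∃ x y : A.carrier, x ≠ y) → IsRFSI K A)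
    (B : Alg L) (hB : B ∈ K) (C : Alg L) (hC : IsRFSI K C)
    (g : (Alg.pi fun _ : ULift.{u} Bool => B).carrier →[L] C.carrier) :
    ∃ i, ∀ p q, p i = q i → g p = g q := by
  obtain ⟨-, hS, hP, -⟩ := hK
  let P := Alg.pi fun _ : ULift.{u} Bool => B
  have hPK : P ∈ K := hP _ _ fun _ => hB
  by_cases htriv : ∀ p q, g p = g q
  · exact ⟨⟨true⟩, fun p q _ => htriv p q⟩
  push Not at htriv
  obtain ⟨p₀, q₀, hpq⟩ := htriv
  let κ : P.carrier → P.carrier → Prop := fun p q => g p = g q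
  let π : ULift.{u} Bool → P.carrier → P.carrier → Prop := fun i p q => p i = q i
  have hκ : IsRelCong K P κ := relCong_ker hS hC.1 g fun k f x => hom_funMap g f x
  have hπ : ∀ i, IsRelCong K P (π i) := fun i =>
    relCong_ker hS (A := P) hB (fun p => p i) fun k f x => rfl
  -- the quotient by the kernel is relatively finitely subdirectly irreducible
  obtain ⟨hκc, hκq⟩ := hκ
  have hemb : Nonempty ((Alg.quot P κ hκc.1).carrier ↪[L] C.carrier) := by
    let q : (Alg.quot P κ hκc.1).carrier → C.carrier :=
      Quotient.lift (s := (⟨_, hκc.1⟩ : Setoid P.carrier)) g fun _ _ h => h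
    have hq : ∀ x, q (qmk P κ hκc.1 x) = g x := fun _ => rfl
    refine nonempty_emb q ?_ ?_
    · intro k f x
      choose y hy using fun i => qmk_surj P _ hκc.1 (x i)
      obtain rfl : (fun i => qmk P _ hκc.1 (y i)) = x := funext hy
      rw [qmk_funMap P _ hκc, hq, hom_funMap]
      rfl
    · intro a b hab
      obtain ⟨a, rfl⟩ := qmk_surj P _ hκc.1 a
      obtain ⟨b, rfl⟩ := qmk_surj P _ hκc.1 b
      exact (qmk_eq P _ hκc.1 _ _).2 hab
  have hQ : IsRFSI K (Alg.quot P κ hκc.1) := hsub _ _ hC hemb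
    ⟨qmk P κ hκc.1 p₀, qmk P κ hκc.1 q₀, fun h => hpq ((qmk_eq P κ hκc.1 _ _).1 h)⟩
  let J : ULift.{u} Bool → P.carrier → P.carrier → Prop := fun i => relCongJoin K P κ (π i)
  have hJ : ∀ i, IsRelCong K P (J i) := fun i => relCong_join hS hP _ _
  have hκJ : ∀ i a b, κ a b → J i a b := fun i a b h ρ _ h1 _ => h1 a b h
  have hπJ : ∀ i a b, π i a b → J i a b := fun i a b h ρ _ _ h1 => h1 a b h
  have hκ : IsRelCong K P κ := ⟨hκc, hκq⟩
  have hmeet : ∀ p q, J ⟨false⟩ p q → J ⟨true⟩ p q → κ p q := by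
    intro p q h1 h2
    have := (hRCD P hPK (J ⟨false⟩) κ (π ⟨true⟩) (hJ _) hκ (hπ _) p q).1 ⟨h1, h2⟩
    refine this κ hκ (fun a b h => h.2) ?_
    rintro a b ⟨ha, hb⟩
    have := (hRCD P hPK (π ⟨true⟩) κ (π ⟨false⟩) (hπ _) hκ (hπ _) a b).1 ⟨hb, ha⟩
    refine this κ hκ (fun a b h => h.2) ?_
    rintro a b ⟨ha, hb⟩
    have : a = b := by
      funext i
      rcases i with ⟨_ | _⟩
      · exact hb
      · exact ha
    exact this ▸ rfl
  choose hJc hJq using hJ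
  -- transfer the joins to the quotient
  let m : ∀ i, (Alg.quot P κ hκc.1).carrier → (Alg.quot P (J i) (hJc i).1).carrier := fun i =>
    Quotient.lift (s := (⟨_, hκc.1⟩ : Setoid P.carrier)) (qmk P (J i) (hJc i).1)
      fun a b h => (qmk_eq _ _ _ _ _).2 (hκJ i a b h)
  have hm : ∀ i x, m i (qmk P κ hκc.1 x) = qmk P (J i) (hJc i).1 x := fun _ _ => rfl
  obtain ⟨i, hi⟩ := ((rfsi_iff hS _).1 hQ).2 (ULift.{u} Bool) inferInstance
    (fun i x y => m i x = m i y)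
    (fun i => relCong_ker hS (hJq i) (m i) (by
      intro k f x
      choose y hy using fun i => qmk_surj P _ hκc.1 (x i)
      obtain rfl : (fun i => qmk P _ hκc.1 (y i)) = x := funext hy
      rw [qmk_funMap P _ hκc, hm, ← qmk_funMap P _ (hJc i)]
      rfl))
    (by
      intro a b hab
      obtain ⟨a, rfl⟩ := qmk_surj P _ hκc.1 a
      obtain ⟨b, rfl⟩ := qmk_surj P _ hκc.1 b
      refine (qmk_eq _ _ _ _ _).2 (hmeet a b ?_ ?_)
      · exact (qmk_eq _ _ _ _ _).1 (hab ⟨false⟩)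
      · exact (qmk_eq _ _ _ _ _).1 (hab ⟨true⟩))
  refine ⟨i, fun p q h => ?_⟩
  refine (qmk_eq P κ hκc.1 p q).1 (hi _ _ ?_)
  exact (qmk_eq _ _ _ _ _).2 (hπJ i p q h)

/-- If `d` is in the dominion of `S` (witnessed by a family of elements), then there is an
implicit operation producing `d` from finitely many members of `S`. -/
theorem exists_implicitOp [L.IsAlgebraic] {K : Set (Alg L)} (hK : IsQuasivariety K)
    (P : Alg L) (hP : P ∈ K) {σ : Type u} (s : σ → P.carrier) (s₀ : σ) (d : P.carrier)
    (hdom : ∀ C : Alg L, C ∈ K → ∀ g h : P.carrier →[L] C.carrier,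
      (∀ a, g (s a) = h (s a)) → g d = h d) :
    ∃ n, 0 < n ∧ ∃ (g : PartialFunOn K n), IsImplicitOp g ∧
      ∃ a : Fin n → σ, d ∈ g P hP fun i => s (a i) := by
  classical
  obtain ⟨-, hS, -, hU⟩ := hK
  let D := Σ k : ℕ, L.Functions k × (Fin k → P.carrier)
  let el : D → L.Term P.carrier := fun d => Term.func d.2.1 fun i => Term.var (d.2.2 i)
  let er : D → L.Term P.carrier := fun d => Term.var (Structure.funMap d.2.1 d.2.2)
  let X := P.carrier ⊕ P.carrier
  let E : (D ⊕ D) ⊕ σ → L.Term X × L.Term X :=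
    Sum.elim (Sum.elim (fun d => ((el d).relabel Sum.inl, (er d).relabel Sum.inl))
      (fun d => ((el d).relabel Sum.inr, (er d).relabel Sum.inr)))
      (fun a => (Term.var (Sum.inl (s a)), Term.var (Sum.inr (s a))))
  obtain ⟨J0, hJ⟩ := compactness hU E (Term.var (Sum.inl d), Term.var (Sum.inr d)) (by
    intro C hC v hv
    have h1 : ∀ (k : ℕ) (f : L.Functions k) (x : Fin k → P.carrier),
        v (Sum.inl (Structure.funMap f x)) = Structure.funMap f fun i => v (Sum.inl (x i)) :=
      fun k f x => (hv (Sum.inl (Sum.inl ⟨k, f, x⟩))).symm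
    have h2 : ∀ (k : ℕ) (f : L.Functions k) (x : Fin k → P.carrier),
        v (Sum.inr (Structure.funMap f x)) = Structure.funMap f fun i => v (Sum.inr (x i)) :=
      fun k f x => (hv (Sum.inl (Sum.inr ⟨k, f, x⟩))).symm
    exact hdom C hC (mkHom (fun x => v (Sum.inl x)) h1) (mkHom (fun x => v (Sum.inr x)) h2)
      fun a => hv (Sum.inr a))
  let Y : Finset D := J0.toLeft.toLeft ∪ J0.toLeft.toRight
  let S0 : Finset σ := insert s₀ J0.toRight
  have hfun : ∀ C : Alg L, C ∈ K → ∀ v w : P.carrier → C.carrier,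
      (∀ y ∈ Y, (el y).realize v = (er y).realize v) →
      (∀ y ∈ Y, (el y).realize w = (er y).realize w) →
      (∀ a ∈ S0, v (s a) = w (s a)) → v d = w d := by
    intro C hC v w hv hw hs
    refine hJ C hC (Sum.elim v w) ?_
    rintro ((y | y) | a) hj
    · have := hv y (Finset.mem_union_left _ (by simpa using hj))
      simpa [E, Term.realize_relabel, Function.comp_def] using this
    · have := hw y (Finset.mem_union_right _ (by simpa using hj))
      simpa [E, Term.realize_relabel, Function.comp_def] using this
    · exact hs a (Finset.mem_insert_of_mem (by simpa using hj))
  -- the finite set of variables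
  let V : Finset P.carrier := insert d (S0.image s ∪ Y.biUnion fun y =>
    insert (Structure.funMap y.2.1 y.2.2) (Finset.univ.image y.2.2))
  have hdV : d ∈ V := Finset.mem_insert_self _ _
  let r : P.carrier → V := fun p => if h : p ∈ V then ⟨p, h⟩ else ⟨d, hdV⟩
  have hr : ∀ p ∈ V, (r p : P.carrier) = p := by
    intro p hp
    simp [r, hp]
  have hsV : ∀ a ∈ S0, s a ∈ V := fun a ha => by
    refine Finset.mem_insert_of_mem (Finset.mem_union_left _ (Finset.mem_image_of_mem _ ha))
  have hyV : ∀ y ∈ Y, ∀ i, y.2.2 i ∈ V := fun y hy i => by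
    refine Finset.mem_insert_of_mem (Finset.mem_union_right _ (Finset.mem_biUnion.2 ⟨y, hy, ?_⟩))
    exact Finset.mem_insert_of_mem (Finset.mem_image_of_mem _ (Finset.mem_univ i))
  have hyV' : ∀ y ∈ Y, Structure.funMap y.2.1 y.2.2 ∈ V := fun y hy => by
    refine Finset.mem_insert_of_mem (Finset.mem_union_right _ (Finset.mem_biUnion.2 ⟨y, hy, ?_⟩))
    exact Finset.mem_insert_self _ _
  let n := S0.card
  let a : Fin n → σ := fun i => (S0.equivFin.symm i).1
  have ha : ∀ b ∈ S0, ∃ i, a i = b := fun b hb => ⟨S0.equivFin ⟨b, hb⟩, by simp [a]⟩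
  have ha' : ∀ i, a i ∈ S0 := fun i => (S0.equivFin.symm i).2
  let ψ : L.Formula (Fin (n + 1) ⊕ V) :=
    (Formula.iInf fun y : Y => Term.equal ((el y.1).relabel fun p => Sum.inr (r p))
      ((er y.1).relabel fun p => Sum.inr (r p))) ⊓
    ((Formula.iInf fun i : Fin n => Term.equal (Term.var (Sum.inl i.castSucc))
      (Term.var (Sum.inr (r (s (a i)))))) ⊓
      Term.equal (Term.var (Sum.inl (Fin.last n))) (Term.var (Sum.inr (r d))))
  let φ : L.Formula (Fin (n + 1)) := ψ.iExs V
  have hφ : ∀ (C : Alg L) (x : Fin n → C.carrier) (b : C.carrier),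
      φ.Realize (Fin.snoc x b : Fin (n + 1) → C.carrier) ↔ ∃ w : V → C.carrier,
        (∀ y ∈ Y, (el y).realize (fun p => w (r p)) = (er y).realize (fun p => w (r p))) ∧
        (∀ i, x i = w (r (s (a i)))) ∧ b = w (r d) := by
    intro C x b
    simp only [φ, Formula.realize_iExs, ψ, Formula.realize_inf, Formula.realize_iInf,
      Formula.realize_equal, Term.realize_relabel, Term.realize_var, Sum.elim_inl, Sum.elim_inr,
      Fin.snoc_castSucc, Fin.snoc_last, Function.comp_def, Subtype.forall]
  have hfunct : FunctionalIn K φ := by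
    intro C hC x b₁ b₂ h1 h2
    obtain ⟨w1, hw1, hx1, rfl⟩ := (hφ C x b₁).1 h1
    obtain ⟨w2, hw2, hx2, rfl⟩ := (hφ C x b₂).1 h2
    refine hfun C hC (fun p => w1 (r p)) (fun p => w2 (r p)) hw1 hw2 fun b hb => ?_
    obtain ⟨i, rfl⟩ := ha b hb
    exact (hx1 i).symm.trans (hx2 i)
  let g : PartialFunOn K n := fun C _ x =>
    ⟨∃ b, φ.Realize (Fin.snoc x b : Fin (n + 1) → C.carrier), fun h => h.choose⟩
  have hg : DefinedBy g φ := by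
    intro C hC x b
    constructor
    · rintro ⟨h, rfl⟩
      exact h.choose_spec
    · intro h
      exact ⟨⟨b, h⟩, hfunct C hC x _ _ (Exists.choose_spec (⟨b, h⟩ : ∃ b,
        φ.Realize (Fin.snoc x b : Fin (n + 1) → C.carrier))) h⟩
  refine ⟨n, Finset.card_pos.2 ⟨s₀, Finset.mem_insert_self _ _⟩, g, ⟨⟨φ, hg⟩, ?_⟩, a, ?_⟩
  · intro A B hA hB h x b hb
    obtain ⟨w, hw, hx, rfl⟩ := (hφ A x b).1 ((hg A hA x b).1 hb)
    refine (hg B hB _ _).2 ((hφ B _ _).2 ⟨fun p => h (w p), fun y hy => ?_, fun i => ?_, rfl⟩)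
    · have := congrArg h (hw y hy)
      rw [← HomClass.realize_term, ← HomClass.realize_term] at this
      exact this
    · exact congrArg h (hx i)
  · refine (hg P hP _ _).2 ((hφ P _ _).2 ⟨fun p => p.1, fun y hy => ?_, fun i => ?_, ?_⟩)
    · simp only [el, er, Term.realize]
      rw [hr _ (hyV' y hy)]
      exact congrArg _ (funext fun i => hr _ (hyV y hy i))
    · exact (hr _ (hsV _ (ha' i))).symm
    · exact (hr _ hdV).symm

theorem compat_term {A : Alg L} (S : A.carrier → A.carrier → Prop)
    (hS : ∀ (k : ℕ) (f : L.Functions k) (x y : Fin k → A.carrier),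
      (∀ i, S (x i) (y i)) → S (Structure.funMap f x) (Structure.funMap f y))
    {α : Type v} (t : L.Term α) (x y : α → A.carrier) (h : ∀ i, S (x i) (y i)) :
    S (t.realize x) (t.realize y) := by
  induction t with
  | var a => exact h a
  | func f ts ih => exact hS _ f _ _ ih

/-- The pair `(a, b)` as an element of the square of an algebra. -/
def pr {B : Alg L} (a b : B.carrier) : (Alg.pi fun _ : ULift.{u} Bool => B).carrier :=
  fun i => match i.down with
    | false => a
    | true => b

theorem pr_diag_funMap {B : Alg L} {k : ℕ} (f : L.Functions k) (x : Fin k → B.carrier) :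
    pr (Structure.funMap f x) (Structure.funMap f x) =
      Structure.funMap f fun i => pr (x i) (x i) := by
  funext i
  rcases i with ⟨_ | _⟩ <;> rfl

/-- The pair of `S`-related elements lies in the dominion. -/
theorem dominion_step [L.IsAlgebraic] {K : Set (Alg L)} (hK : IsQuasivariety K)
    (hRCD : RelCongDistributive K)
    (hsub : ∀ A B : Alg L, IsRFSI K B → Nonempty (A.carrier ↪[L] B.carrier) →
      (∃ x y : A.carrier, x ≠ y) → IsRFSI K A)
    (B D : Alg L) (hD : D ∈ K) (j : B.carrier → D.carrier)
    (hj : ∀ (k : ℕ) (f : L.Functions k) (x : Fin k → B.carrier),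
      j (Structure.funMap f x) = Structure.funMap f fun i => j (x i))
    {α : Type u} (e : α → B.carrier) (S : α → α → Prop) (hrefl : ∀ a, S a a) (x y : α)
    (hxy : ∀ ρ, IsRelCong K B ρ → (∀ a b, S a b → ρ (e a) (e b)) → ρ (e x) (e y))
    (C : Alg L) (hC : C ∈ K)
    (g h : (Alg.pi fun _ : ULift.{u} Bool => D).carrier →[L] C.carrier)
    (hgh : ∀ a b, S a b → g (pr (j (e a)) (j (e b))) = h (pr (j (e a)) (j (e b)))) :
    g (pr (j (e x)) (j (e y))) = h (pr (j (e x)) (j (e y))) := by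
  by_contra hne
  obtain ⟨C', hC', m, hm⟩ := exists_rfsi_sep hK hC _ _ hne
  let g' := m.comp g
  let h' := m.comp h
  have hgh' : ∀ a b, S a b → g' (pr (j (e a)) (j (e b))) = h' (pr (j (e a)) (j (e b))) :=
    fun a b hab => congrArg m (hgh a b hab)
  refine hm ?_
  change g' _ = h' _
  obtain ⟨i, hi⟩ := prime_step hK hRCD hsub D hD C' hC' g'
  obtain ⟨i', hi'⟩ := prime_step hK hRCD hsub D hD C' hC' h'
  have hker : IsRelCong K B (fun a b => g' (pr (j a) (j a)) = g' (pr (j b) (j b))) :=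
    relCong_ker hK.2.1 hC'.1 (fun a => g' (pr (j a) (j a))) (by
      intro k f x
      rw [hj, pr_diag_funMap, hom_funMap])
  have hxy' := hxy _ hker
  have hd := fun a => hgh' a a (hrefl a)
  rcases i with ⟨_ | _⟩ <;> rcases i' with ⟨_ | _⟩
  · rw [hi (pr (j (e x)) (j (e y))) (pr (j (e x)) (j (e x))) rfl, hd x]
    exact hi' _ _ rfl
  · have := hxy' (by
      intro a b hab
      rw [hi (pr (j (e a)) (j (e a))) (pr (j (e a)) (j (e b))) rfl, hgh' a b hab, hd b]
      exact hi' _ _ rfl)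
    rw [hi (pr (j (e x)) (j (e y))) (pr (j (e x)) (j (e x))) rfl, this, hd y]
    exact hi' _ _ rfl
  · have := hxy' (by
      intro a b hab
      rw [hd a, hi' (pr (j (e a)) (j (e a))) (pr (j (e a)) (j (e b))) rfl, ← hgh' a b hab]
      exact hi _ _ rfl)
    rw [hi (pr (j (e x)) (j (e y))) (pr (j (e y)) (j (e y))) rfl, ← this, hd x]
    exact hi' _ _ rfl
  · rw [hi (pr (j (e x)) (j (e y))) (pr (j (e y)) (j (e y))) rfl, hd y]
    exact hi' _ _ rfl

theorem mem_of_expClass {L' : FirstOrder.Language.{u, u}} (S : Set (Alg L')) : S ⊆ SClosure S :=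
  fun A hA => ⟨A, hA, ⟨Embedding.refl L' A.carrier⟩⟩

theorem reduct_funMap {N : FirstOrder.Language.{u, u}} (B : Alg (L.sum N)) {k : ℕ}
    (f : L.Functions k) (x : Fin k → B.carrier) :
    (Structure.funMap (L := L) (M := (algReduct B).carrier) f x) =
      Structure.funMap (L := L.sum N) (M := B.carrier)
        (Sum.inl f : (L.sum N).Functions k) x := rfl

/-- The key lemma: compatible reflexive relations on subalgebras are closed under the
`M`-congruences they generate in bigger algebras. -/
theorem key_lemma [L.IsAlgebraic]
    {K : Set (Alg L)} (hK : IsQuasivariety K) (hRCD : RelCongDistributive K)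
    (hsub : ∀ A B : Alg L, IsRFSI K B → Nonempty (A.carrier ↪[L] B.carrier) →
      (∃ x y : A.carrier, x ≠ y) → IsRFSI K A)
    {ι : Type u} (ar : ι → ℕ) (f : ∀ i, PartialFunOn K (ar i))
    (M : Set (Alg (L.sum (newLang ar))))
    (hM : IsBethCompanionVia K ar f M) (hCP : CongPreserving K M)
    (A B : Alg (L.sum (newLang ar))) (hB : B ∈ M)
    (e : A.carrier ↪[L.sum (newLang ar)] B.carrier)
    (S : A.carrier → A.carrier → Prop) (hrefl : ∀ a, S a a)
    (hS : ∀ (k : ℕ) (f : (L.sum (newLang ar)).Functions k) (x y : Fin k → A.carrier),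
      (∀ i, S (x i) (y i)) → S (Structure.funMap f x) (Structure.funMap f y))
    (x y : A.carrier)
    (hxy : ∀ ρ, IsRelCong M B ρ → (∀ a b, S a b → ρ (e a) (e b)) → ρ (e x) (e y)) :
    S x y := by
  obtain ⟨⟨-, hf, rfl⟩, hint⟩ := hM
  have hB' := hB
  obtain ⟨D, hD, ⟨j⟩⟩ := hB'
  let P := Alg.pi fun _ : ULift.{u} Bool => D
  have hP : P ∈ expClass K ar f := expClass_pi hK.2.2.1 hf _ fun _ => hD
  have hPK : algReduct P ∈ K := hP.choose
  have hDK : algReduct D ∈ K := hD.choose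
  have hdom := dominion_step hK hRCD hsub (algReduct B) (algReduct D) hDK (fun b => j b)
    (fun k f x => emb_funMap j (Sum.inl f : (L.sum (newLang ar)).Functions k) x)
    (fun a => e a) S hrefl x y (fun ρ hρ h => hxy ρ ((hCP B hB ρ).2 hρ) h)
  obtain ⟨n, hn, g, hg, a, ha⟩ := exists_implicitOp hK (algReduct P) hPK
    (σ := {p : A.carrier × A.carrier // S p.1 p.2})
    (fun p => pr (B := D) (j (e p.1.1)) (j (e p.1.2))) ⟨(x, x), hrefl x⟩
    (pr (B := D) (j (e x)) (j (e y)))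
    (fun C hC g h hgh => hdom C hC g h fun a b hab => hgh ⟨(a, b), hab⟩)
  obtain ⟨T, hT⟩ := hint n hn g hg
  obtain ⟨t, -, ht⟩ := hT P (mem_of_expClass _ hP) hPK _ _ ha
  have h1 : t.realize (fun i => (a i).1.1) = x := by
    refine e.injective (j.injective ?_)
    rw [← HomClass.realize_term, ← HomClass.realize_term]
    have := congrFun ht ⟨false⟩
    exact (pi_realize (fun _ : ULift.{u} Bool => D) t _ ⟨false⟩).symm.trans this
  have h2 : t.realize (fun i => (a i).1.2) = y := by
    refine e.injective (j.injective ?_)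
    rw [← HomClass.realize_term, ← HomClass.realize_term]
    have := congrFun ht ⟨true⟩
    exact (pi_realize (fun _ : ULift.{u} Bool => D) t _ ⟨true⟩).symm.trans this
  rw [← h1, ← h2]
  exact compat_term S hS t _ _ fun i => (a i).2

theorem sClosure_sub {L' : FirstOrder.Language.{u, u}} (S : Set (Alg L')) :
    ClosedUnderSub (SClosure S) := by
  rintro A B ⟨C, hC, ⟨e⟩⟩ ⟨e'⟩
  exact ⟨C, hC, ⟨e.comp e'⟩⟩

theorem sClosure_prod {L' : FirstOrder.Language.{u, u}} [L'.IsAlgebraic] (S : Set (Alg L'))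
    (hS : ∀ (κ : Type u) (B : κ → Alg L'), (∀ k, B k ∈ S) → Alg.pi B ∈ S) :
    ClosedUnderProd (SClosure S) := by
  intro κ A hA
  choose B hB e using hA
  refine ⟨Alg.pi B, hS κ B hB, ?_⟩
  let m : (Alg.pi A).carrier → (Alg.pi B).carrier := fun x k => (e k).some (x k)
  refine nonempty_emb m ?_ ?_
  · intro k f x
    funext i
    exact emb_funMap (e i).some f _
  · intro x y h
    funext k
    exact (e k).some.injective (congrFun h k)

theorem reduct_emb [L.IsAlgebraic] {ι : Type u} {ar : ι → ℕ} {A B : Alg (L.sum (newLang ar))}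
    (e : A.carrier ↪[L.sum (newLang ar)] B.carrier) :
    Nonempty ((algReduct A).carrier ↪[L] (algReduct B).carrier) :=
  nonempty_emb (M := (algReduct A).carrier) (N := (algReduct B).carrier) (fun a => e a)
    (fun k f x => emb_funMap e (Sum.inl f : (L.sum (newLang ar)).Functions k) x) e.injective

end Helpers

/-- Let `K` be a relatively congruence distributive quasivariety whose class
of relatively finitely subdirectly irreducible members is closed under nontrivial subalgebras.
Then every congruence preserving Beth companion `M` of `K` is an arithmetical variety with the
congruence extension property whose class of finitely subdirectly irreducible members is
closed under nontrivial subalgebras. -/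
theorem statement_15 {L : FirstOrder.Language.{u, u}} [L.IsAlgebraic]
    {K : Set (Alg L)} (hK : IsQuasivariety K) (hRCD : RelCongDistributive K)
    (hsub : ∀ A B : Alg L, IsRFSI K B → Nonempty (A.carrier ↪[L] B.carrier) →
      (∃ x y : A.carrier, x ≠ y) → IsRFSI K A)
    {ι : Type u} (ar : ι → ℕ) (f : ∀ i, PartialFunOn K (ar i))
    (M : Set (Alg (L.sum (newLang ar))))
    (hM : IsBethCompanionVia K ar f M) (hCP : CongPreserving K M) :
    IsVariety M ∧ CongPermutableClass M ∧ CongDistributiveClass M ∧ HasCEP M ∧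
      ∀ A B : Alg (L.sum (newLang ar)), IsRFSI M B →
        Nonempty (A.carrier ↪[L.sum (newLang ar)] B.carrier) →
          (∃ x y : A.carrier, x ≠ y) → IsRFSI M A := by
  have hPP := hM.1
  have hMdef : M = SClosure (expClass K ar f) := hPP.2.2
  have hMS : ClosedUnderSub M := hMdef ▸ sClosure_sub _
  have hMP : ClosedUnderProd M := hMdef ▸ sClosure_prod _ fun κ B hB =>
    expClass_pi hK.2.2.1 hPP.2.1 B hB
  have hred : ∀ A ∈ M, algReduct A ∈ K := by
    intro A hA
    rw [hMdef] at hA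
    obtain ⟨B, hB, ⟨e⟩⟩ := hA
    exact hK.2.1 _ _ hB.choose (reduct_emb e)
  have key := key_lemma hK hRCD hsub ar f M hM hCP
  -- reflexive compatible relations are `M`-congruences
  have hrel : ∀ A ∈ M, ∀ S : A.carrier → A.carrier → Prop, (∀ a, S a a) →
      (∀ (k : ℕ) (f : (L.sum (newLang ar)).Functions k) (x y : Fin k → A.carrier),
        (∀ i, S (x i) (y i)) → S (Structure.funMap f x) (Structure.funMap f y)) →
      IsRelCong M A S := by
    intro A hA S hr hc
    convert relCong_sInf hMS hMP (A := A) {ρ | IsRelCong M A ρ ∧ ∀ a b, S a b → ρ a b}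
      (fun ρ h => h.1) using 3 with x y
    constructor
    · intro h ρ hρ
      exact hρ.2 x y h
    · intro h
      exact key A A hA (Embedding.refl _ _) S hr hc x y fun ρ hρ hS => h ρ ⟨hρ, hS⟩
  have hcong : ∀ A ∈ M, ∀ θ : A.carrier → A.carrier → Prop,
      IsCongruenceOn A θ → IsRelCong M A θ := fun A hA θ hθ =>
    hrel A hA θ hθ.1.refl hθ.2
  have hcongK : ∀ A ∈ M, ∀ θ : A.carrier → A.carrier → Prop,
      IsCongruenceOn A θ ↔ IsRelCong K (algReduct A) θ := fun A hA θ =>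
    ⟨fun h => (hCP A hA θ).1 (hcong A hA θ h), fun h => ((hCP A hA θ).2 h).choose⟩
  refine ⟨⟨?_, hMS, hMP⟩, ?_, ?_, ?_, ?_⟩
  · intro A B hA h hsurj
    obtain ⟨hc, hq⟩ := hcong A hA _ (isCong_ker (A := A) (C := B) h fun k f x => hom_funMap h f x)
    refine hMS B _ hq ?_
    choose s hs using hsurj
    refine nonempty_emb (fun b => qmk A _ hc.1 (s b)) ?_ ?_
    · intro k f x
      rw [qmk_funMap A _ hc, qmk_eq]
      change h _ = h _
      rw [hs, hom_funMap]
      exact congrArg _ (funext fun i => (hs (x i)).symm)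
    · intro a b hab
      have : h (s a) = h (s b) := (qmk_eq A _ hc.1 _ _).1 hab
      rwa [hs, hs] at this
  · have hsymm : ∀ A : Alg (L.sum (newLang ar)), A ∈ M →
        ∀ θ φ : A.carrier → A.carrier → Prop, IsCongruenceOn A θ → IsCongruenceOn A φ →
          ∀ x y : A.carrier, (∃ z, θ x z ∧ φ z y) → ∃ z, φ x z ∧ θ z y := by
      intro A hA θ φ hθ hφ x y hz
      obtain ⟨hc, -⟩ := hrel A hA (fun x y => ∃ z, θ x z ∧ φ z y)
        (fun a => ⟨a, hθ.1.refl a, hφ.1.refl a⟩) (by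
          intro k f x y h
          choose z hz using h
          exact ⟨Structure.funMap f z, hθ.2 k f _ _ fun i => (hz i).1,
            hφ.2 k f _ _ fun i => (hz i).2⟩)
      obtain ⟨z, h1, h2⟩ := hc.1.symm hz
      exact ⟨z, hφ.1.symm h2, hθ.1.symm h1⟩
    exact fun A hA θ φ hθ hφ x y => ⟨hsymm A hA θ φ hθ hφ x y, hsymm A hA φ θ hφ hθ x y⟩
  · intro A hA θ φ ψ hθ hφ hψ x y
    have hj : ∀ θ φ : A.carrier → A.carrier → Prop,
        congJoin A θ φ x y ↔ relCongJoin K (algReduct A) θ φ x y := by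
      intro θ φ
      exact forall_congr' fun ρ => imp_congr_left (hcongK A hA ρ)
    rw [hj, hj]
    exact hRCD (algReduct A) (hred A hA) θ φ ψ ((hcongK A hA θ).1 hθ) ((hcongK A hA φ).1 hφ)
      ((hcongK A hA ψ).1 hψ) x y
  · intro A B hA hB e θ hθ
    obtain ⟨hc, -⟩ := relCong_sInf hMS hMP (A := B)
      {ρ | IsRelCong M B ρ ∧ ∀ a b, θ a b → ρ (e a) (e b)} (fun ρ h => h.1)
    refine ⟨_, hc, fun x y => ⟨fun h ρ hρ => hρ.2 x y h, fun h => ?_⟩⟩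
    exact key A B hB e θ hθ.1.refl hθ.2 x y fun ρ hρ hS => h ρ ⟨hρ, hS⟩
  · have htrans : ∀ A ∈ M, (IsRFSI M A ↔ IsRFSI K (algReduct A)) := by
      intro A hA
      rw [rfsi_iff hMS, rfsi_iff hK.2.1]
      refine and_congr (iff_of_true hA (hred A hA)) ?_
      refine forall_congr' fun ι => forall_congr' fun _ => forall_congr' fun ρ => ?_
      exact imp_congr_left (forall_congr' fun i => hCP A hA (ρ i))
    rintro A B hB ⟨e⟩ hne
    have hA : A ∈ M := hMS A B hB.1 ⟨e⟩
    exact (htrans A hA).2 (hsub _ _ ((htrans B hB.1).1 hB) (reduct_emb e) hne)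

end Impl
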